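/- arXiv:1804.00679 — 5 statements merged into one kernel-verified Lean document; each statement's English description precedes it below -/
import Mathlib

section
/- Let 0 ≤ r ≤ 8. A class l ∈ ℤ^{1+r} is a line class if and only if, after a permutation of the entries a_1, …, a_r, the vector (d; a_1, …, a_r) representing l is one of the following: (0; −1, 0^{r−1}) (for r ≥ 1), (1; 1, 1, 0^{r−2}) (for r ≥ 2), (2; 1^5, 0^{r−5}) (for r ≥ 5), (3; 2, 1^6, 0^{r−7}) (for r ≥ 7), (4; 2^3, 1^5) (for r = 8), (5; 2^6, 1^2) (for r = 8), (6; 3, 2^7) (for r = 8). -/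
/-!
Writing a class as `(d; a_1, …, a_r)`, being a line class means `∑ a_i = 3d - 1` and
`∑ a_i² = d² + 1`. The Cauchy–Schwarz inequality with `r ≤ 8` bounds the degree by `-1 ≤ d ≤ 7`
(`degree_bound`).

For each integer `c` the sum `∑ (a_i - c)(a_i - c - 1)` has nonnegative terms, and its value
`d² + 1 - (2c + 1)(3d - 1) + c(c + 1)r` is known (`sum_quad`). A suitable `c` (close to the average
of the entries) makes this value negative for `d = -1, 7`, excluding those degrees; for `d = 4, 5, 6`
it is nonnegative only when `r = 8`. In every remaining case except `d = 3` the value is zero, so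
that all entries lie in `{c, c + 1}` and their multiplicities follow from the sum
(`exists_perm_pair`). For `d = 3` the value is `2` with `c = 0`, so exactly one entry lies outside
`{0, 1}`, and counting leaves only the value `2` for it (`exists_perm_cubic`).
-/

/-- Intersection pairing on the Picard lattice of `S_r`, with classes written in
`(d; a_1, …, a_r)` coordinates (the class `d·h − ∑ a_i·e_i`):
`(d; a)·(d'; a') = d·d' − ∑ a_i·a_i'`. -/
def inter {r : ℕ} (x y : ℤ × (Fin r → ℤ)) : ℤ :=
  x.1 * y.1 - ∑ i, x.2 i * y.2 i

/-- The canonical class `K = (−3; −1, …, −1)` of `S_r`. -/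
def Kcl (r : ℕ) : ℤ × (Fin r → ℤ) := (-3, fun _ => -1)

/-- A line class: `l·l = −1` and `(−K)·l = 1`. -/
def IsLine {r : ℕ} (l : ℤ × (Fin r → ℤ)) : Prop :=
  inter l l = -1 ∧ inter (-(Kcl r)) l = 1

/-- A conic class: `C·C = 0` and `(−K)·C = 2`. -/
def IsConic {r : ℕ} (C : ℤ × (Fin r → ℤ)) : Prop :=
  inter C C = 0 ∧ inter (-(Kcl r)) C = 2

/-- Arithmetic genus `p_a(β) = β·(β+K)/2 + 1`. -/
def pa {r : ℕ} (β : ℤ × (Fin r → ℤ)) : ℤ :=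
  inter β (β + Kcl r) / 2 + 1

open Finset in
/-- Two tuples whose fibres have the same sizes differ by a permutation. -/
lemma exists_perm_of_card_fiber {r : ℕ} (f g : Fin r → ℤ)
    (h : ∀ v, #{i | f i = v} = #{i | g i = v}) : ∃ σ : Equiv.Perm (Fin r), f ∘ σ = g := by
  have e : ∀ v, Nonempty ({i // g i = v} ≃ {i // f i = v}) := fun v =>
    ⟨Fintype.equivOfCardEq (by rw [Fintype.card_subtype, Fintype.card_subtype, h v])⟩
  exact ⟨Equiv.ofFiberEquiv fun v => (e v).some,
    funext fun i => Equiv.ofFiberEquiv_map (fun v => (e v).some) i⟩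

open Finset in
/-- A tuple with values `x`, `y`, `z` is, up to order, determined by the number of entries equal
to `x` and the number equal to `x` or `y`. -/
lemma exists_perm_three {r p q : ℕ} {x y z : ℤ} (f : Fin r → ℤ) (hxy : x ≠ y) (hxz : x ≠ z)
    (hyz : y ≠ z) (hf : ∀ i, f i = x ∨ f i = y ∨ f i = z)
    (hx : #{i | f i = x} = p) (hy : p + #{i | f i = y} = q) (hq : q ≤ r) :
    ∃ σ : Equiv.Perm (Fin r), f ∘ σ = fun i : Fin r =>
      if (i : ℕ) < p then x else if (i : ℕ) < q then y else z := by
  -- A fibre count is determined by the counts over `x` and `y`, the total being `r`.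
  have total : ∀ g : Fin r → ℤ, (∀ i, g i = x ∨ g i = y ∨ g i = z) →
      #{i | g i = x} + #{i | g i = y} + #{i | g i = z} = r := by
    intro g hg
    simp only [card_filter, ← sum_add_distrib]
    rw [sum_congr rfl (g := fun _ => 1)]
    · simp
    · intro i _
      rcases hg i with h | h | h <;> simp [h, hxy, hxz, hyz, hxy.symm, hxz.symm, hyz.symm]
  set g : Fin r → ℤ := fun i => if (i : ℕ) < p then x else if (i : ℕ) < q then y else z with hgdef
  have hg : ∀ i, g i = x ∨ g i = y ∨ g i = z := by
    intro i; simp only [hgdef]; split_ifs <;> simp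
  have gx : #{i | g i = x} = p := by
    have : (univ.filter fun i => g i = x) = univ.filter fun i : Fin r => (i : ℕ) < p := by
      ext i; simp only [hgdef, mem_filter]; grind
    rw [this, Fin.card_filter_val_lt]; omega
  have gxy : #{i | g i = x} + #{i | g i = y} = q := by
    have : (univ.filter fun i => g i = x) ∪ (univ.filter fun i => g i = y)
        = univ.filter fun i : Fin r => (i : ℕ) < q := by
      ext i
      have hpq : p ≤ q := by omega
      simp only [hgdef, mem_filter, mem_union]
      grind
    rw [← card_union_of_disjoint, this, Fin.card_filter_val_lt]
    · omega
    · rw [disjoint_filter]; intro i _ h1 h2; exact hxy (h1.symm.trans h2)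
  have tf := total f hf
  have tg := total g hg
  apply exists_perm_of_card_fiber
  intro v
  by_cases h1 : v = x
  · subst h1; omega
  by_cases h2 : v = y
  · subst h2; omega
  by_cases h3 : v = z
  · subst h3; omega
  have none : ∀ g : Fin r → ℤ, (∀ i, g i = x ∨ g i = y ∨ g i = z) → #{i | g i = v} = 0 := by
    intro g hg
    rw [card_eq_zero, filter_eq_empty_iff]
    rintro i - rfl
    have := hg i
    tauto
  rw [none f hf, none g hg]

open Finset in
lemma exists_perm_two {r p : ℕ} {x y : ℤ} (f : Fin r → ℤ) (hxy : x ≠ y)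
    (hf : ∀ i, f i = x ∨ f i = y) (hx : #{i | f i = x} = p) :
    ∃ σ : Equiv.Perm (Fin r), f ∘ σ = fun i : Fin r => if (i : ℕ) < p then x else y := by
  have hpr : p ≤ r := by
    rw [← hx]; exact (card_le_univ _).trans_eq (Fintype.card_fin r)
  -- A third value, taken by no entry, reduces to the three-valued case.
  obtain ⟨w, hwx, hwy⟩ : ∃ w, w ≠ x ∧ w ≠ y := ⟨max x y + 1, by grind, by grind⟩
  have hw : #{i | f i = w} = 0 := by
    rw [card_eq_zero, filter_eq_empty_iff]
    intro i _ h
    rcases hf i with h' | h' <;> grind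
  obtain ⟨σ, hσ⟩ := exists_perm_three (q := p) (y := w) (z := y) f hwx.symm hxy hwy
    (fun i => by have := hf i; tauto) hx (by rw [hw, add_zero]) hpr
  refine ⟨σ, hσ.trans ?_⟩
  funext i
  split_ifs <;> rfl

lemma isLine_iff {r : ℕ} (l : ℤ × (Fin r → ℤ)) :
    IsLine l ↔ ∑ i, l.2 i ^ 2 = l.1 ^ 2 + 1 ∧ ∑ i, l.2 i = 3 * l.1 - 1 := by
  simp only [IsLine, inter, Kcl, Prod.fst_neg, Prod.snd_neg, Pi.neg_apply, neg_neg, one_mul, sq]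
  constructor <;> rintro ⟨h1, h2⟩ <;> constructor <;> linarith

/-- The two sums defining a line class may be computed on a permuted tuple `g`. -/
lemma isLine_of_perm {r : ℕ} (l : ℤ × (Fin r → ℤ)) (σ : Equiv.Perm (Fin r)) {d : ℤ}
    {g : Fin r → ℤ} (hd : l.1 = d) (hσ : l.2 ∘ σ = g)
    (h2 : ∑ i, g i ^ 2 = d ^ 2 + 1) (h1 : ∑ i, g i = 3 * d - 1) : IsLine l := by
  subst hd hσ
  rw [isLine_iff, ← h2, ← h1]
  exact ⟨(Equiv.sum_comp σ fun i => l.2 i ^ 2).symm, (Equiv.sum_comp σ l.2).symm⟩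

/-- Since `(∑ a_i)² ≤ r ∑ a_i²` with `r ≤ 8`, the degree of a line class satisfies
`d² - 6d - 7 ≤ 0`. -/
lemma degree_bound {r : ℕ} (hr : r ≤ 8) (d : ℤ) (f : Fin r → ℤ)
    (h2 : ∑ i, f i ^ 2 = d ^ 2 + 1) (h1 : ∑ i, f i = 3 * d - 1) : -1 ≤ d ∧ d ≤ 7 := by
  have h := sq_sum_le_card_mul_sum_sq (s := Finset.univ) (f := f)
  rw [h1, h2, Finset.card_univ, Fintype.card_fin] at h
  have hr' : (r : ℤ) ≤ 8 := by exact_mod_cast hr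
  have : (d + 1) * (d - 7) ≤ 0 := by nlinarith [sq_nonneg d]
  constructor <;> by_contra! hd <;> nlinarith

lemma sum_quad {r : ℕ} {s t : ℤ} {f : Fin r → ℤ} (c : ℤ)
    (h2 : ∑ i, f i ^ 2 = s) (h1 : ∑ i, f i = t) :
    ∑ i, (f i - c) * (f i - (c + 1)) = s - (2 * c + 1) * t + c * (c + 1) * r := by
  have : ∀ i, (f i - c) * (f i - (c + 1)) = f i ^ 2 - (2 * c + 1) * f i + c * (c + 1) := by
    intro i; ring
  simp only [this, Finset.sum_add_distrib, Finset.sum_sub_distrib, ← Finset.mul_sum, h1, h2]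
  simp only [Finset.sum_const, Finset.card_univ, Fintype.card_fin, nsmul_eq_mul]
  ring

/-- A product of two consecutive integers is nonnegative. -/
lemma quad_nonneg (c a : ℤ) : 0 ≤ (a - c) * (a - (c + 1)) := by
  rcases le_or_gt a c with h | h
  · exact mul_nonneg_of_nonpos_of_nonpos (by omega) (by omega)
  · exact mul_nonneg (by omega) (by omega)

lemma two_values {r : ℕ} {f : Fin r → ℤ} (c : ℤ)
    (h : ∑ i, (f i - c) * (f i - (c + 1)) ≤ 0) (i : Fin r) : f i = c + 1 ∨ f i = c := by
  have h0 := (Finset.sum_eq_zero_iff_of_nonneg fun i _ => quad_nonneg c (f i)).1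
    (le_antisymm h (Finset.sum_nonneg fun i _ => quad_nonneg c (f i))) i (Finset.mem_univ i)
  rcases mul_eq_zero.1 h0 with h | h <;> omega

open Finset in
lemma card_top {r : ℕ} {f : Fin r → ℤ} {c : ℤ} (h : ∀ i, f i = c + 1 ∨ f i = c) :
    (#{i | f i = c + 1} : ℤ) = ∑ i, f i - c * r := by
  have : ∀ i, f i = (if f i = c + 1 then 1 else 0) + c := by
    intro i; rcases h i with h | h <;> simp [h]; ring
  rw [sum_congr rfl fun i _ => this i, sum_add_distrib, sum_boole]
  simp [mul_comm]

open Finset in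
/-- If the sum `t` and the sum of squares `s` give `∑ (a_i - c) (a_i - c - 1) ≤ 0`, then all
entries lie in `{c, c + 1}`, and the number `p` of entries equal to `c + 1` is read off from `t`. -/
lemma exists_perm_pair {r : ℕ} {s t : ℤ} {f : Fin r → ℤ} (c : ℤ) (p : ℕ)
    (h2 : ∑ i, f i ^ 2 = s) (h1 : ∑ i, f i = t)
    (hT : s - (2 * c + 1) * t + c * (c + 1) * r ≤ 0) (hp : t - c * r = p) :
    p ≤ r ∧ ∃ σ : Equiv.Perm (Fin r), f ∘ σ = fun i : Fin r => if (i : ℕ) < p then c + 1 else c := by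
  have hv := two_values c ((sum_quad c h2 h1).trans_le hT)
  have hc : #{i | f i = c + 1} = p := by
    have := card_top hv
    rw [h1, hp] at this
    exact_mod_cast this
  refine ⟨?_, exists_perm_two f (by omega) hv hc⟩
  rw [← hc]; exact (card_le_univ _).trans_eq (Fintype.card_fin r)

open Finset in
/-- The cubic case: here `∑ a_i (a_i - 1) = 2`, so exactly one entry lies outside `{0, 1}`. It is
`2` or `-1`, and `-1` would force nine entries equal to `1`. -/
lemma exists_perm_cubic {r : ℕ} (hr : r ≤ 8) {f : Fin r → ℤ}
    (h2 : ∑ i, f i ^ 2 = 10) (h1 : ∑ i, f i = 8) :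
    7 ≤ r ∧ ∃ σ : Equiv.Perm (Fin r), f ∘ σ = fun i : Fin r =>
      if (i : ℕ) < 1 then 2 else if (i : ℕ) < 7 then 1 else 0 := by
  have hT : ∑ i, (f i - 0) * (f i - (0 + 1)) = 2 := by
    rw [sum_quad 0 h2 h1]; norm_num
  have hv : ∀ i, f i = 2 ∨ f i = 1 ∨ f i = 0 ∨ f i = -1 := by
    intro i
    have := single_le_sum (fun i _ => quad_nonneg 0 (f i)) (mem_univ i)
    rw [hT] at this
    have hlo : -1 ≤ f i := by nlinarith
    have hhi : f i ≤ 2 := by nlinarith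
    omega
  have total : #{i | f i = 2} + #{i | f i = 1} + #{i | f i = 0} + #{i | f i = -1} = r := by
    simp only [card_filter, ← sum_add_distrib]
    rw [sum_congr rfl (g := fun _ => 1)]
    · simp
    · intro i _
      rcases hv i with h | h | h | h <;> simp [h]
  have e1 : (2 * #{i | f i = 2} + #{i | f i = 1} - #{i | f i = -1} : ℤ) = 8 := by
    rw [← h1]
    simp only [← sum_boole, mul_sum, ← sum_add_distrib, ← sum_sub_distrib]
    refine sum_congr rfl fun i _ => ?_
    rcases hv i with h | h | h | h <;> simp [h]
  have e2 : (4 * #{i | f i = 2} + #{i | f i = 1} + #{i | f i = -1} : ℤ) = 10 := by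
    rw [← h2]
    simp only [← sum_boole, mul_sum, ← sum_add_distrib]
    refine sum_congr rfl fun i _ => ?_
    rcases hv i with h | h | h | h <;> simp [h]
  have hm : #{i | f i = -1} = 0 := by omega
  have hr7 : 7 ≤ r := by omega
  refine ⟨hr7, exists_perm_three f (by norm_num) (by norm_num) (by norm_num) (fun i => ?_)
    (by omega) (by omega) hr7⟩
  have hi : f i ≠ -1 := (filter_eq_empty_iff.1 (card_eq_zero.1 hm)) (mem_univ i)
  have := hv i
  tauto

/-- classification of line classes on `S_r`, `0 ≤ r ≤ 8`,
up to a permutation of the entries `a_1, …, a_r`. -/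
theorem line_class_classification (r : ℕ) (hr : r ≤ 8) (l : ℤ × (Fin r → ℤ)) :
    IsLine l ↔ ∃ σ : Equiv.Perm (Fin r),
      (1 ≤ r ∧ l.1 = 0 ∧ l.2 ∘ σ = fun i : Fin r => if (i : ℕ) < 1 then -1 else 0) ∨
      (2 ≤ r ∧ l.1 = 1 ∧ l.2 ∘ σ = fun i : Fin r => if (i : ℕ) < 2 then 1 else 0) ∨
      (5 ≤ r ∧ l.1 = 2 ∧ l.2 ∘ σ = fun i : Fin r => if (i : ℕ) < 5 then 1 else 0) ∨
      (7 ≤ r ∧ l.1 = 3 ∧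
        l.2 ∘ σ = fun i : Fin r => if (i : ℕ) < 1 then 2 else if (i : ℕ) < 7 then 1 else 0) ∨
      (r = 8 ∧ l.1 = 4 ∧ l.2 ∘ σ = fun i : Fin r => if (i : ℕ) < 3 then 2 else 1) ∨
      (r = 8 ∧ l.1 = 5 ∧ l.2 ∘ σ = fun i : Fin r => if (i : ℕ) < 6 then 2 else 1) ∨
      (r = 8 ∧ l.1 = 6 ∧ l.2 ∘ σ = fun i : Fin r => if (i : ℕ) < 1 then 3 else 2) := by
  constructor
  · intro hl
    obtain ⟨d, f⟩ := l
    obtain ⟨h2, h1⟩ := (isLine_iff _).1 hl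
    dsimp only at h1 h2 ⊢
    obtain ⟨hlo, hhi⟩ := degree_bound hr d f h2 h1
    have hT : ∀ c : ℤ, 0 ≤ d ^ 2 + 1 - (2 * c + 1) * (3 * d - 1) + c * (c + 1) * r := fun c =>
      sum_quad c h2 h1 ▸ Finset.sum_nonneg fun i _ => quad_nonneg c (f i)
    interval_cases d
    · have := hT (-1)
      omega
    -- In degree `0` the listed vector is increasing, so the negated tuple is the one to use.
    · obtain ⟨hr1, σ, hσ⟩ := exists_perm_pair (f := fun i => -f i) (s := 1) (t := 1) 0 1
        (by simpa using h2) (by simp [h1]) (by omega) (by omega)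
      refine ⟨σ, .inl ⟨hr1, rfl, ?_⟩⟩
      funext i
      have hi := congrFun hσ i
      simp only [Function.comp_apply] at hi ⊢
      split_ifs at hi ⊢ <;> omega
    · obtain ⟨hr2, σ, hσ⟩ := exists_perm_pair 0 2 h2 h1 (by omega) (by omega)
      exact ⟨σ, .inr <| .inl ⟨hr2, rfl, hσ⟩⟩
    · obtain ⟨hr5, σ, hσ⟩ := exists_perm_pair 0 5 h2 h1 (by omega) (by omega)
      exact ⟨σ, .inr <| .inr <| .inl ⟨hr5, rfl, hσ⟩⟩
    · obtain ⟨hr7, σ, hσ⟩ := exists_perm_cubic hr h2 h1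
      exact ⟨σ, .inr <| .inr <| .inr <| .inl ⟨hr7, rfl, hσ⟩⟩
    -- In degrees `4`, `5`, `6` nonnegativity of the sum forces `r = 8`.
    · have := hT 1
      obtain rfl : r = 8 := by omega
      obtain ⟨-, σ, hσ⟩ := exists_perm_pair 1 3 h2 h1 (by norm_num) (by norm_num)
      exact ⟨σ, .inr <| .inr <| .inr <| .inr <| .inl ⟨rfl, rfl, hσ⟩⟩
    · have := hT 1
      obtain rfl : r = 8 := by omega
      obtain ⟨-, σ, hσ⟩ := exists_perm_pair 1 6 h2 h1 (by norm_num) (by norm_num)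
      exact ⟨σ, .inr <| .inr <| .inr <| .inr <| .inr <| .inl ⟨rfl, rfl, hσ⟩⟩
    · have := hT 2
      obtain rfl : r = 8 := by omega
      obtain ⟨-, σ, hσ⟩ := exists_perm_pair 2 1 h2 h1 (by norm_num) (by norm_num)
      exact ⟨σ, .inr <| .inr <| .inr <| .inr <| .inr <| .inr ⟨rfl, rfl, hσ⟩⟩
    · have := hT 2
      omega
  · rintro ⟨σ, ⟨h, hd, hσ⟩ | ⟨h, hd, hσ⟩ | ⟨h, hd, hσ⟩ | ⟨h, hd, hσ⟩ | ⟨h, hd, hσ⟩ |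
      ⟨h, hd, hσ⟩ | ⟨h, hd, hσ⟩⟩ <;> refine isLine_of_perm l σ hd hσ ?_ ?_ <;> clear hσ hd <;>
      clear σ l <;> interval_cases r <;> first | omega | decide
end

section
/- Let 0 ≤ r ≤ 8. A class D ∈ ℤ^{1+r} is a conic class if and only if, after a permutation of the entries a_1, …, a_r, the vector (d; a_1, …, a_r) representing D is one of the following: (1; 1, 0^{r−1}) (for r ≥ 1), (2; 1^4, 0^{r−4}) (for r ≥ 4), (3; 2, 1^5, 0^{r−6}) (for r ≥ 6), (4; 2^3, 1^4, 0^{r−7}) (for r ≥ 7), (5; 2^6, 1, 0^{r−7}) (for r ≥ 7), and, for r = 8: (4; 3, 1^7), (5; 3, 2^3, 1^4), (6; 3^2, 2^4, 1^2), (7; 3^4, 2^3, 1), (7; 4, 3, 2^6), (8; 3^7, 1), (8; 4, 3^4, 2^3), (9; 4^2, 3^5, 2), (10; 4^4, 3^4), (11; 4^7, 3). -/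
/-- The decreasing function on `Fin r` whose first `n₄` values are `4`, whose next `n₃` values are
`3`, and so on down to `n₁` values `1`, the remaining ones being `0`. -/
def staircase (r n₁ n₂ n₃ n₄ : ℕ) : Fin r → ℤ := fun i =>
  if (i : ℕ) < n₄ then 4 else if (i : ℕ) < n₄ + n₃ then 3
  else if (i : ℕ) < n₄ + n₃ + n₂ then 2 else if (i : ℕ) < n₄ + n₃ + n₂ + n₁ then 1 else 0

theorem isConic_iff {r : ℕ} (D : ℤ × (Fin r → ℤ)) :
    IsConic D ↔ ∑ i, D.2 i ^ 2 = D.1 ^ 2 ∧ ∑ i, D.2 i = 3 * D.1 - 2 := by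
  simp only [IsConic, inter, Kcl, Prod.fst_neg, Prod.snd_neg, Pi.neg_apply, neg_neg, one_mul, sq]
  constructor <;> rintro ⟨h₁, h₂⟩ <;> constructor <;> linarith

theorem degree_bounds {r : ℕ} (hr : r ≤ 8) {D : ℤ × (Fin r → ℤ)} (h : IsConic D) :
    1 ≤ D.1 ∧ D.1 ≤ 11 := by
  obtain ⟨h₂, h₁⟩ := (isConic_iff D).1 h
  have hcs := sq_sum_le_card_mul_sum_sq (s := Finset.univ) (f := D.2)
  rw [h₂, h₁, Finset.card_univ, Fintype.card_fin] at hcs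
  have hr' : (r : ℤ) ≤ 8 := by exact_mod_cast hr
  have : (3 * D.1 - 2) ^ 2 ≤ 8 * D.1 ^ 2 := hcs.trans (by gcongr)
  constructor <;> nlinarith

theorem entry_bounds {r : ℕ} (hr : r ≤ 8) {D : ℤ × (Fin r → ℤ)} (h : IsConic D) (i : Fin r) :
    0 ≤ D.2 i ∧ D.2 i ≤ 4 := by
  obtain ⟨h₂, h₁⟩ := (isConic_iff D).1 h
  have hcs := sq_sum_le_card_mul_sum_sq (s := Finset.univ.erase i) (f := D.2)
  have e₁ := Finset.add_sum_erase Finset.univ D.2 (Finset.mem_univ i)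
  have e₂ := Finset.add_sum_erase Finset.univ (fun j => D.2 j ^ 2) (Finset.mem_univ i)
  have hc : ((Finset.univ.erase i).card : ℤ) ≤ 7 := by
    rw [Finset.card_erase_of_mem (Finset.mem_univ i), Finset.card_univ, Fintype.card_fin]
    omega
  have hq : ((∑ j ∈ Finset.univ.erase i, D.2 j) ^ 2 : ℤ) ≤
      7 * ∑ j ∈ Finset.univ.erase i, D.2 j ^ 2 :=
    hcs.trans (mul_le_mul_of_nonneg_right hc (Finset.sum_nonneg fun _ _ => sq_nonneg _))
  rw [show ∑ j ∈ Finset.univ.erase i, D.2 j = 3 * D.1 - 2 - D.2 i by linarith,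
    show ∑ j ∈ Finset.univ.erase i, D.2 j ^ 2 = D.1 ^ 2 - D.2 i ^ 2 by linarith] at hq
  -- The inequality `hq` is quadratic in `D.1`; its discriminant has to be nonnegative.
  have hd : D.2 i ^ 2 - 4 * D.2 i - 4 ≤ 0 := by
    nlinarith [sq_nonneg (2 * D.1 - 3 * D.2 i - 6)]
  constructor <;> nlinarith

/-- A sum over a function with values in `{0, …, 4}`, grouped by the value. -/
theorem sum_eq_of_mem_Icc {r : ℕ} {f : Fin r → ℤ} (hf : ∀ i, 0 ≤ f i ∧ f i ≤ 4) (g : ℤ → ℤ) :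
    ∑ i, g (f i) = ∑ j ∈ Finset.Icc (0 : ℤ) 4, (Finset.univ.filter (f · = j)).card * g j := by
  rw [← Finset.sum_fiberwise_of_maps_to (t := Finset.Icc (0 : ℤ) 4) (g := f)
    (fun i _ => Finset.mem_Icc.2 (hf i))]
  refine Finset.sum_congr rfl fun j _ => ?_
  rw [Finset.sum_congr rfl (g := fun _ => g j) fun i hi => by rw [(Finset.mem_filter.1 hi).2]]
  simp

theorem card_filter_staircase {r n₁ n₂ n₃ n₄ : ℕ} (h : n₄ + n₃ + n₂ + n₁ ≤ r) :
    (Finset.univ.filter (staircase r n₁ n₂ n₃ n₄ · = 1)).card = n₁ ∧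
    (Finset.univ.filter (staircase r n₁ n₂ n₃ n₄ · = 2)).card = n₂ ∧
    (Finset.univ.filter (staircase r n₁ n₂ n₃ n₄ · = 3)).card = n₃ ∧
    (Finset.univ.filter (staircase r n₁ n₂ n₃ n₄ · = 4)).card = n₄ := by
  -- Each nonzero value is attained exactly on an interval of indices.
  have key : ∀ (v : ℤ) (a b : ℕ), b ≤ r →
      (∀ i : Fin r, staircase r n₁ n₂ n₃ n₄ i = v ↔ a ≤ (i : ℕ) ∧ (i : ℕ) < b) →
      (Finset.univ.filter (staircase r n₁ n₂ n₃ n₄ · = v)).card = b - a := by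
    intro v a b hb hv
    rw [← Nat.card_Ico, ← Finset.card_map Fin.valEmbedding]
    congr 1
    ext x
    simp only [Finset.mem_map, Finset.mem_filter, Finset.mem_univ, true_and, hv,
      Fin.valEmbedding_apply, Finset.mem_Ico]
    exact ⟨by rintro ⟨i, hi, rfl⟩; exact hi, fun hx => ⟨⟨x, by omega⟩, hx, rfl⟩⟩
  refine ⟨?_, ?_, ?_, ?_⟩
  · rw [key 1 (n₄ + n₃ + n₂) (n₄ + n₃ + n₂ + n₁) h]
    · omega
    · intro i; simp only [staircase]; split_ifs <;> omega
  · rw [key 2 (n₄ + n₃) (n₄ + n₃ + n₂) (by omega)]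
    · omega
    · intro i; simp only [staircase]; split_ifs <;> omega
  · rw [key 3 n₄ (n₄ + n₃) (by omega)]
    · omega
    · intro i; simp only [staircase]; split_ifs <;> omega
  · rw [key 4 0 n₄ (by omega)]
    · omega
    · intro i; simp only [staircase]; split_ifs <;> omega

theorem staircase_mem {r n₁ n₂ n₃ n₄ : ℕ} (i : Fin r) :
    0 ≤ staircase r n₁ n₂ n₃ n₄ i ∧ staircase r n₁ n₂ n₃ n₄ i ≤ 4 := by
  simp only [staircase]; split_ifs <;> omega

theorem Icc_zero_four : Finset.Icc (0 : ℤ) 4 = {0, 1, 2, 3, 4} := by decide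

theorem sum_eq_counts {r : ℕ} {f : Fin r → ℤ} (hf : ∀ i, 0 ≤ f i ∧ f i ≤ 4) (g : ℤ → ℤ) :
    ∑ i, g (f i) = (Finset.univ.filter (f · = 0)).card * g 0 +
      (Finset.univ.filter (f · = 1)).card * g 1 + (Finset.univ.filter (f · = 2)).card * g 2 +
      (Finset.univ.filter (f · = 3)).card * g 3 + (Finset.univ.filter (f · = 4)).card * g 4 := by
  rw [sum_eq_of_mem_Icc hf, Icc_zero_four]
  simp [add_assoc]

/-- A function with values in `{0, …, 4}` can be sorted into decreasing order: its fibres have the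
same sizes as those of the corresponding staircase. -/
theorem exists_perm_eq_staircase {r : ℕ} {f : Fin r → ℤ} (hf : ∀ i, 0 ≤ f i ∧ f i ≤ 4) :
    ∃ σ : Equiv.Perm (Fin r), f ∘ σ = staircase r (Finset.univ.filter (f · = 1)).card
      (Finset.univ.filter (f · = 2)).card (Finset.univ.filter (f · = 3)).card
      (Finset.univ.filter (f · = 4)).card := by
  -- The sum of the constant `1` counts all indices, which fixes the size of the fibre over `0`.
  have hs := sum_eq_counts hf fun _ => 1
  set n₁ := (Finset.univ.filter (f · = 1)).card
  set n₂ := (Finset.univ.filter (f · = 2)).card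
  set n₃ := (Finset.univ.filter (f · = 3)).card
  set n₄ := (Finset.univ.filter (f · = 4)).card
  have hs' := sum_eq_counts (staircase_mem (r := r) (n₁ := n₁) (n₂ := n₂) (n₃ := n₃) (n₄ := n₄))
    fun _ => 1
  simp only [Finset.sum_const, Finset.card_univ, Fintype.card_fin, mul_one, nsmul_eq_mul] at hs hs'
  obtain ⟨c₁, c₂, c₃, c₄⟩ := card_filter_staircase (r := r) (n₁ := n₁) (n₂ := n₂) (n₃ := n₃)
    (n₄ := n₄) (by omega)
  have hcard : ∀ v, Fintype.card {i // staircase r n₁ n₂ n₃ n₄ i = v} =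
      Fintype.card {i // f i = v} := by
    intro v
    rw [Fintype.card_subtype, Fintype.card_subtype]
    by_cases hv : 0 ≤ v ∧ v ≤ 4
    · obtain ⟨hv₀, hv₄⟩ := hv
      interval_cases v
      · omega
      · exact c₁
      · exact c₂
      · exact c₃
      · exact c₄
    · rw [Finset.filter_false_of_mem, Finset.filter_false_of_mem]
      · rintro i - rfl
        exact hv (hf i)
      · rintro i - rfl
        exact hv (staircase_mem i)
  exact ⟨Equiv.ofFiberEquiv fun v => Fintype.equivOfCardEq (hcard v),
    funext fun i => Equiv.ofFiberEquiv_map _ i⟩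

/-- The degree together with the numbers of entries equal to `1`, `2`, `3`, `4`, for each type of
conic class. -/
def conicTypes : List (ℤ × ℕ × ℕ × ℕ × ℕ) :=
  [(1, 1, 0, 0, 0), (2, 4, 0, 0, 0), (3, 5, 1, 0, 0), (4, 4, 3, 0, 0), (5, 1, 6, 0, 0),
    (4, 7, 0, 1, 0), (5, 4, 3, 1, 0), (6, 2, 4, 2, 0), (7, 1, 3, 4, 0), (7, 0, 6, 1, 1),
    (8, 1, 0, 7, 0), (8, 0, 3, 4, 1), (9, 0, 1, 5, 2), (10, 0, 0, 4, 4), (11, 0, 0, 1, 7)]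

/-- The finite search: the three equations count the entries, sum them and sum their squares. -/
theorem mem_conicTypes {r n₀ n₁ n₂ n₃ n₄ : ℕ} {d : ℤ} (hr : r ≤ 8) (hd₁ : 1 ≤ d)
    (hd₂ : d ≤ 11) (h₀ : n₀ + n₁ + n₂ + n₃ + n₄ = r)
    (h₁ : (n₁ + 2 * n₂ + 3 * n₃ + 4 * n₄ : ℤ) = 3 * d - 2)
    (h₂ : (n₁ + 4 * n₂ + 9 * n₃ + 16 * n₄ : ℤ) = d ^ 2) :
    (d, n₁, n₂, n₃, n₄) ∈ conicTypes := by
  have hn : n₁ + n₂ + n₃ + n₄ ≤ 8 := by omega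
  clear h₀ hr
  have b₂ : n₂ ≤ 8 := by omega
  have b₃ : n₃ ≤ 8 := by omega
  have b₄ : n₄ ≤ 8 := by omega
  interval_cases d <;> norm_num at h₁ h₂ <;> interval_cases n₄ <;> first
  | (exfalso; omega)
  | interval_cases n₃ <;> first
    | (exfalso; omega)
    | interval_cases n₂ <;> first
      | (exfalso; omega)
      | (have b₁ : n₁ ≤ 8 := by omega
         interval_cases n₁ <;> first | (exfalso; omega) | decide)

/-- classification of conic classes on `S_r`, `0 ≤ r ≤ 8`,
up to a permutation of the entries `a_1, …, a_r`. -/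
theorem conic_class_classification (r : ℕ) (hr : r ≤ 8) (D : ℤ × (Fin r → ℤ)) :
    IsConic D ↔ ∃ σ : Equiv.Perm (Fin r),
      (1 ≤ r ∧ D.1 = 1 ∧ D.2 ∘ σ = fun i : Fin r => if (i : ℕ) < 1 then 1 else 0) ∨
      (4 ≤ r ∧ D.1 = 2 ∧ D.2 ∘ σ = fun i : Fin r => if (i : ℕ) < 4 then 1 else 0) ∨
      (6 ≤ r ∧ D.1 = 3 ∧
        D.2 ∘ σ = fun i : Fin r => if (i : ℕ) < 1 then 2 else if (i : ℕ) < 6 then 1 else 0) ∨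
      (7 ≤ r ∧ D.1 = 4 ∧
        D.2 ∘ σ = fun i : Fin r => if (i : ℕ) < 3 then 2 else if (i : ℕ) < 7 then 1 else 0) ∨
      (7 ≤ r ∧ D.1 = 5 ∧
        D.2 ∘ σ = fun i : Fin r => if (i : ℕ) < 6 then 2 else if (i : ℕ) < 7 then 1 else 0) ∨
      (r = 8 ∧ D.1 = 4 ∧ D.2 ∘ σ = fun i : Fin r => if (i : ℕ) < 1 then 3 else 1) ∨
      (r = 8 ∧ D.1 = 5 ∧
        D.2 ∘ σ = fun i : Fin r => if (i : ℕ) < 1 then 3 else if (i : ℕ) < 4 then 2 else 1) ∨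
      (r = 8 ∧ D.1 = 6 ∧
        D.2 ∘ σ = fun i : Fin r => if (i : ℕ) < 2 then 3 else if (i : ℕ) < 6 then 2 else 1) ∨
      (r = 8 ∧ D.1 = 7 ∧
        D.2 ∘ σ = fun i : Fin r => if (i : ℕ) < 4 then 3 else if (i : ℕ) < 7 then 2 else 1) ∨
      (r = 8 ∧ D.1 = 7 ∧
        D.2 ∘ σ = fun i : Fin r => if (i : ℕ) < 1 then 4 else if (i : ℕ) < 2 then 3 else 2) ∨
      (r = 8 ∧ D.1 = 8 ∧ D.2 ∘ σ = fun i : Fin r => if (i : ℕ) < 7 then 3 else 1) ∨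
      (r = 8 ∧ D.1 = 8 ∧
        D.2 ∘ σ = fun i : Fin r => if (i : ℕ) < 1 then 4 else if (i : ℕ) < 5 then 3 else 2) ∨
      (r = 8 ∧ D.1 = 9 ∧
        D.2 ∘ σ = fun i : Fin r => if (i : ℕ) < 2 then 4 else if (i : ℕ) < 7 then 3 else 2) ∨
      (r = 8 ∧ D.1 = 10 ∧ D.2 ∘ σ = fun i : Fin r => if (i : ℕ) < 4 then 4 else 3) ∨
      (r = 8 ∧ D.1 = 11 ∧ D.2 ∘ σ = fun i : Fin r => if (i : ℕ) < 7 then 4 else 3) := by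
  constructor
  · intro h
    obtain ⟨hd₁, hd₂⟩ := degree_bounds hr h
    have hf := entry_bounds hr h
    obtain ⟨h₂, h₁⟩ := (isConic_iff D).1 h
    have e₀ := sum_eq_counts hf fun _ => 1
    have e₁ := sum_eq_counts hf fun x => x
    have e₂ := sum_eq_counts hf fun x => x ^ 2
    simp only [Finset.sum_const, Finset.card_univ, Fintype.card_fin, nsmul_eq_mul, mul_one] at e₀
    rw [h₁] at e₁
    rw [h₂] at e₂
    obtain ⟨σ, hσ⟩ := exists_perm_eq_staircase hf
    refine ⟨σ, ?_⟩
    rw [hσ]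
    clear hσ
    have hc := mem_conicTypes hr hd₁ hd₂ (by exact_mod_cast e₀.symm)
      (by linarith) (by linarith)
    have hle : (Finset.univ.filter (D.2 · = 4)).card + (Finset.univ.filter (D.2 · = 3)).card +
      (Finset.univ.filter (D.2 · = 2)).card + (Finset.univ.filter (D.2 · = 1)).card ≤ r := by omega
    generalize (Finset.univ.filter (D.2 · = 1)).card = n₁ at *
    generalize (Finset.univ.filter (D.2 · = 2)).card = n₂ at *
    generalize (Finset.univ.filter (D.2 · = 3)).card = n₃ at *
    generalize (Finset.univ.filter (D.2 · = 4)).card = n₄ at *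
    clear e₀ e₁ e₂
    simp only [conicTypes, List.mem_cons, Prod.mk.injEq, List.not_mem_nil, or_false] at hc
    simp only [funext_iff, staircase]
    rcases hc with hc | hc | hc | hc | hc | hc | hc | hc | hc | hc | hc | hc | hc | hc | hc <;>
    · obtain ⟨hd, rfl, rfl, rfl, rfl⟩ := hc
      repeat first
        | (refine ⟨?_, hd, fun i => ?_⟩
           · omega
           · have := i.isLt
             split_ifs <;> omega)
        | (refine Or.inl ⟨?_, hd, fun i => ?_⟩
           · omega
           · have := i.isLt
             split_ifs <;> omega)
        | refine Or.inr ?_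
  · rintro ⟨σ, h⟩
    have key : IsConic (D.1, D.2 ∘ σ) → IsConic D := by
      rw [isConic_iff, isConic_iff]
      simp only [Function.comp_apply]
      rw [Equiv.sum_comp σ D.2, Equiv.sum_comp σ fun i => D.2 i ^ 2]
      exact id
    apply key
    rw [isConic_iff]
    rcases h with h | h | h | h | h | h | h | h | h | h | h | h | h | h | h <;>
    · obtain ⟨hr', hd, hg⟩ := h
      rw [hd, hg]
      clear hg key hd σ
      clear D
      first
      | (subst hr'; decide)
      | (interval_cases r <;> decide)
end

section
/- Let 0 ≤ r ≤ 8 and let l_1 ≠ l_2 be two distinct line classes in ℤ^{1+r}. Then l_1·l_2 ≥ 0. -/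
/-- For `r ≤ 8` the intersection form is negative definite on `K^⊥`. -/
theorem eq_zero_of_inter_self_nonneg {r : ℕ} (hr : r ≤ 8) (v : ℤ × (Fin r → ℤ))
    (hK : inter (Kcl r) v = 0) (hv : 0 ≤ inter v v) : v = 0 := by
  have hcs : (∑ i, v.2 i) ^ 2 ≤ (r : ℤ) * ∑ i, v.2 i ^ 2 := by
    simpa using sq_sum_le_card_mul_sum_sq (s := Finset.univ) (f := v.2)
  have hS : 0 ≤ ∑ i, v.2 i ^ 2 := Finset.sum_nonneg fun i _ => sq_nonneg _
  have hr' : (r : ℤ) ≤ 8 := by exact_mod_cast hr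
  simp only [inter, Kcl, neg_one_mul, Finset.sum_neg_distrib] at hK
  simp only [inter, ← pow_two] at hv
  have hsum : ∑ i, v.2 i = 3 * v.1 := by linarith
  rw [hsum] at hcs
  have hd : v.1 ^ 2 = 0 := by nlinarith [sq_nonneg v.1, mul_le_mul_of_nonneg_right hr' hS]
  have hS0 : ∑ i, v.2 i ^ 2 = 0 := by linarith
  rw [Finset.sum_eq_zero_iff_of_nonneg fun i _ => sq_nonneg _] at hS0
  refine Prod.ext (pow_eq_zero_iff two_ne_zero |>.1 hd) (funext fun i => ?_)
  exact pow_eq_zero_iff two_ne_zero |>.1 (hS0 i (Finset.mem_univ i))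

theorem inter_sub_right {r : ℕ} (x y z : ℤ × (Fin r → ℤ)) :
    inter x (y - z) = inter x y - inter x z := by
  simp only [inter, Prod.fst_sub, Prod.snd_sub, Pi.sub_apply, mul_sub, Finset.sum_sub_distrib]
  ring

theorem inter_comm {r : ℕ} (x y : ℤ × (Fin r → ℤ)) : inter x y = inter y x := by
  simp only [inter, mul_comm]

theorem inter_neg_left {r : ℕ} (x y : ℤ × (Fin r → ℤ)) : inter (-x) y = -inter x y := by
  simp only [inter, Prod.fst_neg, Prod.snd_neg, Pi.neg_apply, neg_mul, Finset.sum_neg_distrib]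
  ring

/-- two distinct line classes meet non-negatively. -/
theorem distinct_lines_meet_nonneg (r : ℕ) (hr : r ≤ 8)
    (l₁ l₂ : ℤ × (Fin r → ℤ)) (h₁ : IsLine l₁) (h₂ : IsLine l₂) (hne : l₁ ≠ l₂) :
    0 ≤ inter l₁ l₂ := by
  obtain ⟨hs₁, hk₁⟩ := h₁
  obtain ⟨hs₂, hk₂⟩ := h₂
  rw [inter_neg_left] at hk₁ hk₂
  by_contra! hneg
  refine hne (sub_eq_zero.1 (eq_zero_of_inter_self_nonneg hr (l₁ - l₂) ?_ ?_))
  · rw [inter_sub_right]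
    linarith
  · rw [inter_sub_right, inter_comm _ l₁, inter_comm _ l₂, inter_sub_right, inter_sub_right,
      inter_comm l₂ l₁]
    linarith
end

section
/- A class β = (d; a) ∈ ℤ² (the Picard lattice of S_1) satisfies β·e_1 ≥ 0 and β·(h−e_1) ≥ 0 (β is nef), β·β > 0 (β is big), and p_a(β) = 0, if and only if β = (2; 0) or β = (d; d−1) for some integer d ≥ 1. -/
/-!
For `β = (d; a)` one has `β·(β + K) = (d - a - 1)(d + a - 2) - 2`. The two factors have opposite
parity, so the product is even, the division by `2` in `p_a` is exact, and
`2 p_a(β) = (d - a - 1)(d + a - 2)`. Hence `p_a(β) = 0` means `a = d - 1` or `a = 2 - d`; nefness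
and bigness amount to `0 ≤ a < d`, which turns these two cases into the two listed families.
-/

/-- Intersection pairing on `Pic(S_1) = ℤ²` in `(d; a)` coordinates:
`(d; a)·(d'; a') = d·d' − a·a'`. -/
def interS1 (x y : ℤ × ℤ) : ℤ := x.1 * y.1 - x.2 * y.2

/-- The canonical class `K = (−3; −1)` of `S_1`. -/
def KS1 : ℤ × ℤ := (-3, -1)

/-- Arithmetic genus `p_a(β) = β·(β+K)/2 + 1` on `S_1`. -/
def paS1 (β : ℤ × ℤ) : ℤ := interS1 β (β + KS1) / 2 + 1

/-- The genus formula in factored form; it records that the division by `2` in `paS1` is exact. -/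
lemma two_mul_paS1 (d a : ℤ) : 2 * paS1 (d, a) = (d - a - 1) * (d + a - 2) := by
  have hE : interS1 (d, a) ((d, a) + KS1) = (d - a - 1) * (d + a - 2) - 2 := by
    simp only [interS1, KS1, Prod.mk_add_mk]
    ring
  have heven : Even ((d - a - 1) * (d + a - 2)) := by
    rw [Int.even_mul, Int.even_iff, Int.even_iff]
    omega
  obtain ⟨m, hm⟩ := heven
  rw [paS1, hE, hm]
  omega

/-- classification of nef and big classes of arithmetic genus `0` on `S_1`.
Here `e_1 = (0; −1)` and `h − e_1 = (1; 1)` in `(d; a)` coordinates. -/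
theorem S1_nef_big_genus_zero (β : ℤ × ℤ) :
    (0 ≤ interS1 β (0, -1) ∧ 0 ≤ interS1 β (1, 1) ∧ 0 < interS1 β β ∧ paS1 β = 0)
    ↔ (β = (2, 0) ∨ ∃ d : ℤ, 1 ≤ d ∧ β = (d, d - 1)) := by
  obtain ⟨d, a⟩ := β
  have hpa := two_mul_paS1 d a
  have h1 : interS1 (d, a) (0, -1) = a := by simp [interS1]
  have h2 : interS1 (d, a) (1, 1) = d - a := by simp [interS1]
  have h3 : interS1 (d, a) (d, a) = (d - a) * (d + a) := by
    simp only [interS1]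
    ring
  rw [h1, h2, h3]
  simp only [Prod.mk.injEq]
  constructor
  · rintro ⟨ha, hda, hbig, hg⟩
    have hne : d - a ≠ 0 := by
      intro h
      simp [h] at hbig
    rw [hg, mul_zero, eq_comm, mul_eq_zero] at hpa
    rcases hpa with h | h
    · exact Or.inr ⟨d, by omega, rfl, by omega⟩
    -- Here `d + a = 2` and `0 ≤ a < d` leave only `(2; 0)`, as `d = a = 1` is not big.
    · left
      omega
  · rintro (⟨rfl, rfl⟩ | ⟨d', hd, rfl, rfl⟩)
    · norm_num at hpa ⊢
      exact hpa
    · refine ⟨by omega, by omega, mul_pos (by omega) (by omega), ?_⟩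
      have h0 : d - (d - 1) - 1 = 0 := by ring
      rw [h0, zero_mul] at hpa
      omega
end

section
/- Let 0 ≤ r ≤ 8 and let β ∈ ℤ^{1+r} satisfy (β+K)·(β+K) = 1 and (−K)·(β+K) = 1. Then r = 8 and β = −2K. -/
/-- if `(β+K)² = 1` and `(−K)·(β+K) = 1`, then `r = 8` and `β = −2K`. -/
theorem hodge_index_step (r : ℕ) (hr : r ≤ 8) (β : ℤ × (Fin r → ℤ))
    (h1 : inter (β + Kcl r) (β + Kcl r) = 1)
    (h2 : inter (-(Kcl r)) (β + Kcl r) = 1) :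
    r = 8 ∧ β = -(Kcl r + Kcl r) := by
  obtain ⟨D, hD⟩ : ∃ D, D = β + Kcl r := ⟨_, rfl⟩
  rw [← hD] at h1 h2
  obtain rfl : β = D - Kcl r := by rw [hD, add_sub_cancel_right]
  clear hD
  obtain ⟨d, a⟩ := D
  have hsq : d ^ 2 - ∑ i, a i ^ 2 = 1 := by simpa [inter, ← pow_two] using h1
  have hlin : 3 * d - ∑ i, a i = 1 := by simpa [inter, Kcl] using h2
  have hCS : (∑ i, a i) ^ 2 ≤ r * ∑ i, a i ^ 2 := by
    simpa using sq_sum_le_card_mul_sum_sq (s := Finset.univ) (f := a)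
  have hr' : (r : ℤ) ≤ 8 := by exact_mod_cast hr
  have hHodge : ((9 - r) * d - 3) ^ 2 + (r : ℤ) * (8 - r) ≤ 0 := by
    rw [show ∑ i, a i = 3 * d - 1 by linarith, show ∑ i, a i ^ 2 = d ^ 2 - 1 by linarith] at hCS
    nlinarith [mul_le_mul_of_nonneg_left hCS (show (0 : ℤ) ≤ 9 - r by linarith)]
  have hr0 : (0 : ℤ) ≤ r := Int.natCast_nonneg r
  have h8 : r = 8 := by
    have : (r : ℤ) * (8 - r) = 0 :=
      le_antisymm (by nlinarith [sq_nonneg ((9 - (r : ℤ)) * d - 3)])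
        (mul_nonneg hr0 (by linarith))
    rcases mul_eq_zero.mp this with h | h
    · obtain rfl : r = 0 := by exact_mod_cast h
      simp at hlin
      omega
    · omega
  subst h8
  have hd : d = 3 := by
    have : (d - 3) ^ 2 = 0 := le_antisymm (by push_cast at hHodge; linarith) (sq_nonneg _)
    linarith [pow_eq_zero_iff (two_ne_zero) |>.mp this]
  subst hd
  have hsum : ∑ i, (a i - 1) ^ 2 = 0 := by
    have : ∑ i, (a i - 1) ^ 2 = ∑ i, a i ^ 2 - 2 * ∑ i, a i + 8 := by
      simp [sub_sq, Finset.sum_add_distrib, Finset.sum_sub_distrib, Finset.mul_sum]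
    linarith
  have ha : ∀ i, a i = 1 := fun i => by
    have := (Finset.sum_eq_zero_iff_of_nonneg fun i _ => sq_nonneg (a i - 1)).mp hsum i
      (Finset.mem_univ i)
    linarith [pow_eq_zero_iff (two_ne_zero) |>.mp this]
  refine ⟨rfl, Prod.ext ?_ (funext fun i => ?_)⟩
  · simp [Kcl]
  · simp [Kcl, ha i]
end
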